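/- arXiv:2011.05835 — 2 statements merged into one kernel-verified Lean document; each statement's English description precedes it below -/
import Mathlib

section
/- Let X = ℓ∞³, Y = ℓ₁³, and let T : X → Y be a bounded linear operator with ‖T‖ = 1 such that M_T ∩ Ext(B_X) = {±x₁, ±x₂, ±x₃, ±x₄}. If |S₁| = 2, |S₂| = 4 and |S₃| = 2, then T is 7-smooth, i.e., dim span J(T) = 7. -/
open Metric Set Module Pointwise

noncomputable section

/-- `J x` is the set of supporting functionals of `x`. -/
def suppFunctionals {E : Type*} [NormedAddCommGroup E] [NormedSpace ℝ E] (x : E) :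
    Set (E →L[ℝ] ℝ) := {f | ‖f‖ = 1 ∧ f x = 1}

/-- ℓ∞³ : ℝ³ with the max norm. -/
abbrev Linf3 := Fin 3 → ℝ

/-- ℓ₁³ : ℝ³ with the ℓ¹ norm. -/
abbrev L13 := PiLp 1 (fun _ : Fin 3 => ℝ)

def x₁ : Linf3 := ![1, 1, 1]
def x₂ : Linf3 := ![-1, 1, 1]
def x₃ : Linf3 := ![-1, -1, 1]
def x₄ : Linf3 := ![1, -1, 1]

/-- `M_T ∩ Ext(B_X)`: the norm-attainment set of `T` intersected with the
extreme points of the closed unit ball. -/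
def MTExt (T : Linf3 →L[ℝ] L13) : Set Linf3 :=
  {x ∈ sphere (0 : Linf3) 1 | ‖T x‖ = ‖T‖} ∩ extremePoints ℝ (closedBall (0 : Linf3) 1)

/-- `Sk T k` is the set `S_k` of points `x` of `M_T ∩ Ext(B_X)` such that `T x` is
`k`-smooth. -/
def Sk (T : Linf3 →L[ℝ] L13) (k : ℕ) : Set Linf3 :=
  {x ∈ MTExt T | finrank ℝ (Submodule.span ℝ (suppFunctionals (T x))) = k}

/-- `±A`, i.e. `A ∪ (-A)`. -/
def pm {E : Type*} [NormedAddCommGroup E] [NormedSpace ℝ E] (A : Set (E →L[ℝ] ℝ)) :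
    Set (E →L[ℝ] ℝ) := A ∪ (-A)


def fnL : (Fin 3 → ℝ) →ₗ[ℝ] (L13 →L[ℝ] ℝ) where
  toFun h := ∑ j, h j • PiLp.proj (𝕜 := ℝ) 1 (fun _ : Fin 3 => ℝ) j
  map_add' a b := by simp [add_smul, Finset.sum_add_distrib]
  map_smul' c a := by simp [mul_smul, Finset.smul_sum]

lemma fnL_apply (h : Fin 3 → ℝ) (u : L13) : fnL h u = ∑ j, h j * u j := by
  simp [fnL]

lemma norm_L13 (u : L13) : ‖u‖ = ∑ j, |u j| := by
  simp [PiLp.norm_eq_of_L1]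

def ee (j : Fin 3) : L13 := WithLp.toLp 1 (Pi.single j 1)

lemma ee_apply (j k : Fin 3) : ee j k = if k = j then 1 else 0 := by
  simp [ee]

lemma norm_ee (j : Fin 3) : ‖ee j‖ = 1 := by
  rw [norm_L13]; simp [ee_apply, apply_ite]

lemma fnL_ee (h : Fin 3 → ℝ) (j : Fin 3) : fnL h (ee j) = h j := by
  simp [fnL_apply, ee_apply]

lemma fnL_surj (g : L13 →L[ℝ] ℝ) : fnL (fun j => g (ee j)) = g := by
  ext u
  have hu : u = ∑ j, u j • ee j := by
    ext k
    simp [ee_apply]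
  conv_rhs => rw [hu]
  simp [fnL_apply, map_sum, mul_comm]

lemma fnL_norm_le (h : Fin 3 → ℝ) (hh : ∀ j, |h j| ≤ 1) : ‖fnL h‖ ≤ 1 := by
  refine ContinuousLinearMap.opNorm_le_bound _ zero_le_one fun u => ?_
  rw [fnL_apply, norm_L13, one_mul, Real.norm_eq_abs]
  refine (Finset.abs_sum_le_sum_abs _ _).trans (Finset.sum_le_sum fun j _ => ?_)
  rw [abs_mul]
  exact mul_le_of_le_one_left (abs_nonneg _) (hh j)

lemma sign_mul_self' (r : ℝ) : Real.sign r * r = |r| := by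
  rcases lt_trichotomy r 0 with h | h | h
  · rw [Real.sign_of_neg h, abs_of_neg h]; ring
  · simp [h]
  · rw [Real.sign_of_pos h, abs_of_pos h]; ring

lemma abs_sign_le (r : ℝ) : |Real.sign r| ≤ 1 := by
  rcases Real.sign_apply_eq r with h | h | h <;> simp [h]

lemma sign_sq {r : ℝ} (hr : r ≠ 0) : Real.sign r * Real.sign r = 1 := by
  rcases Real.sign_apply_eq_of_ne_zero r hr with h | h <;> simp [h]

/-- coordinates of the span of the supporting functionals -/
def Vc (v : L13) : Submodule ℝ (Fin 3 → ℝ) where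
  carrier := {h | ∃ c : ℝ, ∀ j, v j ≠ 0 → h j = c * Real.sign (v j)}
  add_mem' := by
    rintro a b ⟨c, hc⟩ ⟨d, hd⟩
    exact ⟨c + d, fun j hj => by rw [Pi.add_apply, hc j hj, hd j hj]; ring⟩
  zero_mem' := ⟨0, fun j _ => by simp⟩
  smul_mem' := by
    rintro r a ⟨c, hc⟩
    exact ⟨r * c, fun j hj => by rw [Pi.smul_apply, hc j hj, smul_eq_mul]; ring⟩

lemma mem_Vc {v : L13} {h : Fin 3 → ℝ} :
    h ∈ Vc v ↔ ∃ c : ℝ, ∀ j, v j ≠ 0 → h j = c * Real.sign (v j) := Iff.rfl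

lemma fnL_mem_J {v : L13} (hv : ‖v‖ = 1) {h : Fin 3 → ℝ} (hh : ∀ j, |h j| ≤ 1)
    (hs : ∀ j, v j ≠ 0 → h j = Real.sign (v j)) : fnL h ∈ suppFunctionals v := by
  have e : fnL h v = 1 := by
    rw [fnL_apply, ← hv, norm_L13]
    refine Finset.sum_congr rfl fun j _ => ?_
    by_cases hj : v j = 0
    · simp [hj]
    · rw [hs j hj, sign_mul_self']
  refine ⟨le_antisymm (fnL_norm_le h hh) ?_, e⟩
  have := (fnL h).le_opNorm v
  rw [e, hv] at this
  simpa using this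

lemma J_mem {v : L13} (hv : ‖v‖ = 1) {g : L13 →L[ℝ] ℝ} (hg : g ∈ suppFunctionals v) :
    ∀ j, v j ≠ 0 → g (ee j) = Real.sign (v j) := by
  obtain ⟨h1, h2⟩ := hg
  have hb : ∀ j, |g (ee j)| ≤ 1 := fun j => by
    have := g.le_opNorm (ee j)
    rwa [h1, norm_ee, one_mul, Real.norm_eq_abs] at this
  have hle : ∀ j, g (ee j) * v j ≤ |v j| := fun j => by
    refine (le_abs_self _).trans ?_
    rw [abs_mul]
    exact mul_le_of_le_one_left (abs_nonneg _) (hb j)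
  have hsum : ∑ j, g (ee j) * v j = ∑ j, |v j| := by
    rw [← norm_L13, hv, ← h2]
    conv_rhs => rw [← fnL_surj g]
    rw [fnL_apply]
  have heq := (Finset.sum_eq_sum_iff_of_le (fun j _ => hle j)).1 hsum
  intro j hj
  have := heq j (Finset.mem_univ _)
  rw [← sign_mul_self'] at this
  exact mul_right_cancel₀ hj this

lemma J_mem_Vc {v : L13} (hv : ‖v‖ = 1) {g : L13 →L[ℝ] ℝ} (hg : g ∈ suppFunctionals v) :
    (fun j => g (ee j)) ∈ Vc v :=
  ⟨1, fun j hj => by rw [one_mul]; exact J_mem hv hg j hj⟩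

lemma span_J {v : L13} (hv : ‖v‖ = 1) :
    Submodule.span ℝ (suppFunctionals v) = (Vc v).map fnL := by
  apply le_antisymm
  · rw [Submodule.span_le]
    intro g hg
    exact ⟨_, J_mem_Vc hv hg, fnL_surj g⟩
  · rintro _ ⟨h, ⟨c, hc⟩, rfl⟩
    set s : Fin 3 → ℝ := fun j => Real.sign (v j) with hs
    set M : ℝ := 1 + ∑ j, |h j| with hM
    have hM0 : 0 < M := by
      have : 0 ≤ ∑ j, |h j| := Finset.sum_nonneg fun j _ => abs_nonneg _
      linarith
    have hsJ : fnL s ∈ suppFunctionals v := fnL_mem_J hv (fun j => abs_sign_le _) (fun j _ => rfl)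
    have hkJ : fnL (M⁻¹ • (h + (M - c) • s)) ∈ suppFunctionals v := by
      have key : ∀ j, v j ≠ 0 → (M⁻¹ • (h + (M - c) • s)) j = Real.sign (v j) := by
        intro j hj
        simp only [Pi.smul_apply, Pi.add_apply, smul_eq_mul, hc j hj, hs]
        field_simp
        ring
      refine fnL_mem_J hv (fun j => ?_) key
      by_cases hj : v j = 0
      · simp only [Pi.smul_apply, Pi.add_apply, smul_eq_mul, hs, hj, Real.sign_zero, mul_zero,
          add_zero]
        rw [abs_mul, abs_inv, abs_of_pos hM0, inv_mul_le_iff₀ hM0]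
        have := Finset.single_le_sum (f := fun j => |h j|) (fun i _ => abs_nonneg _)
          (Finset.mem_univ j)
        linarith
      · rw [key j hj]; exact abs_sign_le _
    have e : h = M • (M⁻¹ • (h + (M - c) • s)) - (M - c) • s := by
      rw [smul_smul, mul_inv_cancel₀ hM0.ne', one_smul]; simp
    rw [e, map_sub, map_smul _ M, map_smul _ (M - c)]
    exact Submodule.sub_mem _ (Submodule.smul_mem _ _ (Submodule.subset_span hkJ))
      (Submodule.smul_mem _ _ (Submodule.subset_span hsJ))

lemma fnL_inj : Function.Injective fnL := fun a b h => by
  ext j; rw [← fnL_ee a, h, fnL_ee]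

lemma finrank_span_J {v : L13} (hv : ‖v‖ = 1) :
    finrank ℝ (Submodule.span ℝ (suppFunctionals v)) = finrank ℝ (Vc v) := by
  rw [span_J hv]
  exact ((Vc v).equivMapOfInjective fnL fnL_inj).finrank_eq.symm

open Classical in
def Psi (v : L13) : (Option {j // v j = 0} → ℝ) →ₗ[ℝ] (Fin 3 → ℝ) where
  toFun f j := if h : v j = 0 then f (some ⟨j, h⟩) else f none * Real.sign (v j)
  map_add' a b := by ext j; by_cases h : v j = 0 <;> simp [h, add_mul]
  map_smul' c a := by ext j; by_cases h : v j = 0 <;> simp [h, mul_assoc]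

lemma exists_coord_ne {v : L13} (hv : ‖v‖ = 1) : ∃ j, v j ≠ 0 := by
  by_contra! h
  rw [norm_L13] at hv
  simp [h] at hv

open Classical in
lemma finrank_Vc {v : L13} (hv : ‖v‖ = 1) :
    finrank ℝ (Vc v) = (Finset.univ.filter (fun j => v j = 0)).card + 1 := by
  have hr : LinearMap.range (Psi v) = Vc v := by
    ext h
    constructor
    · rintro ⟨f, rfl⟩
      exact ⟨f none, fun j hj => by simp [Psi, hj]⟩
    · rintro ⟨c, hc⟩
      refine ⟨fun o => o.elim c (fun j => h j), ?_⟩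
      ext j
      by_cases hj : v j = 0
      · simp [Psi, hj]
      · simp [Psi, hj, hc j hj]
  have hi : Function.Injective (Psi v) := by
    intro f g hfg
    obtain ⟨j0, hj0⟩ := exists_coord_ne hv
    ext o
    rcases o with _ | ⟨j, hj⟩
    · have := congrFun hfg j0
      simp only [Psi, LinearMap.coe_mk, AddHom.coe_mk, hj0, dite_false] at this
      exact mul_right_cancel₀ (by simpa [Real.sign_eq_zero_iff] using hj0) this
    · have := congrFun hfg j
      simpa [Psi, hj] using this
  rw [← hr, LinearMap.finrank_range_of_inj hi, Module.finrank_fintype_fun_eq_card,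
    Fintype.card_option, Fintype.card_subtype]

lemma tri {x : ℝ} (hx : x ≠ 0) : (x < 0 ∧ |x| = -x ∧ Real.sign x = -1) ∨
    (0 < x ∧ |x| = x ∧ Real.sign x = 1) := by
  rcases lt_or_gt_of_ne hx with h | h
  · exact Or.inl ⟨h, abs_of_neg h, Real.sign_of_neg h⟩
  · exact Or.inr ⟨h, abs_of_pos h, Real.sign_of_pos h⟩

def Compat (ap aq ar bp bq br : ℝ) : Prop :=
  ∃ e : ℝ, (bp ≠ 0 → Real.sign ap = e * Real.sign bp) ∧
      (bq ≠ 0 → Real.sign aq = e * Real.sign bq) ∧ (br ≠ 0 → Real.sign ar = e * Real.sign br)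

lemma Compat.swap {ap aq ar bp bq br : ℝ} (h : Compat ap aq ar bp bq br) :
    Compat ap ar aq bp br bq := by
  obtain ⟨e, h1, h2, h3⟩ := h
  exact ⟨e, h1, h3, h2⟩

lemma core1 {ap aq ar bq br cp cr : ℝ}
    (ha : |ap| + |aq| + |ar| = 1) (hb : |bq| + |br| = 1) (hc : |cp| + |cr| = 1)
    (hp : ap + cp = 1) (hq : aq + bq = 0) (hr : ar + br + cr = 0)
    (ap0 : ap ≠ 0) (aq0 : aq ≠ 0) (ar0 : ar ≠ 0)
    (bq0 : bq ≠ 0) (br0 : br ≠ 0) (cp0 : cp ≠ 0) (cr0 : cr ≠ 0) :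
    Compat ap aq ar 0 bq br ∧ Compat ap aq ar cp 0 cr := by
  rcases tri ap0 with ⟨h1, e1, s1⟩ | ⟨h1, e1, s1⟩ <;>
  rcases tri aq0 with ⟨h2, e2, s2⟩ | ⟨h2, e2, s2⟩ <;>
  rcases tri bq0 with ⟨h3, e3, s3⟩ | ⟨h3, e3, s3⟩ <;>
  (try (exfalso; linarith)) <;>
  rcases tri ar0 with ⟨h4, e4, s4⟩ | ⟨h4, e4, s4⟩ <;>
  rcases tri cp0 with ⟨h5, e5, s5⟩ | ⟨h5, e5, s5⟩ <;>
  (try (exfalso; linarith)) <;>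
  rcases tri br0 with ⟨h6, e6, s6⟩ | ⟨h6, e6, s6⟩ <;>
  rcases tri cr0 with ⟨h7, e7, s7⟩ | ⟨h7, e7, s7⟩ <;>
  first
  | (exfalso; linarith)
  | (refine ⟨⟨-1, ?_, ?_, ?_⟩, ⟨1, ?_, ?_, ?_⟩⟩ <;> simp [s1, s2, s3, s4, s5, s6, s7])

lemma core2 {ap aq ar bp br cp cq : ℝ}
    (ha : |ap| + |aq| + |ar| = 1) (hb : |bp| + |br| = 1) (hc : |cp| + |cq| = 1)
    (hp : ap + bp + cp = 1) (hq : aq + cq = 0) (hr : ar + br = 0)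
    (ap0 : ap ≠ 0) (aq0 : aq ≠ 0) (ar0 : ar ≠ 0)
    (bp0 : bp ≠ 0) (br0 : br ≠ 0) (cp0 : cp ≠ 0) (cq0 : cq ≠ 0) :
    Compat ap aq ar bp 0 br ∧ Compat ap aq ar cp cq 0 := by
  rcases tri aq0 with ⟨h2, e2, s2⟩ | ⟨h2, e2, s2⟩ <;>
  rcases tri cq0 with ⟨h3, e3, s3⟩ | ⟨h3, e3, s3⟩ <;>
  (try (exfalso; linarith)) <;>
  rcases tri ar0 with ⟨h4, e4, s4⟩ | ⟨h4, e4, s4⟩ <;>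
  rcases tri br0 with ⟨h6, e6, s6⟩ | ⟨h6, e6, s6⟩ <;>
  (try (exfalso; linarith)) <;>
  rcases tri ap0 with ⟨h1, e1, s1⟩ | ⟨h1, e1, s1⟩ <;>
  rcases tri cp0 with ⟨h5, e5, s5⟩ | ⟨h5, e5, s5⟩ <;>
  rcases tri bp0 with ⟨h7, e7, s7⟩ | ⟨h7, e7, s7⟩ <;>
  first
  | (exfalso; linarith)
  | (refine ⟨⟨-1, ?_, ?_, ?_⟩, ⟨-1, ?_, ?_, ?_⟩⟩ <;> simp [s1, s2, s3, s4, s5, s6, s7])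

def OneZero (p q r : ℝ) : Prop :=
  (p = 0 ∧ q ≠ 0 ∧ r ≠ 0) ∨ (p ≠ 0 ∧ q = 0 ∧ r ≠ 0) ∨ (p ≠ 0 ∧ q ≠ 0 ∧ r = 0)

lemma core {ap aq ar bp bq br cp cq cr : ℝ}
    (ha : |ap| + |aq| + |ar| = 1) (hb : |bp| + |bq| + |br| = 1) (hc : |cp| + |cq| + |cr| = 1)
    (hp : ap + bp + cp = 1) (hq : aq + bq + cq = 0) (hr : ar + br + cr = 0)
    (ap0 : ap ≠ 0) (aq0 : aq ≠ 0) (ar0 : ar ≠ 0)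
    (hbz : OneZero bp bq br) (hcz : OneZero cp cq cr) :
    Compat ap aq ar bp bq br ∧ Compat ap aq ar cp cq cr := by
  rcases hbz with ⟨rfl, b2, b3⟩ | ⟨b1, rfl, b3⟩ | ⟨b1, b2, rfl⟩ <;>
  rcases hcz with ⟨rfl, c2, c3⟩ | ⟨c1, rfl, c3⟩ | ⟨c1, c2, rfl⟩ <;>
  simp only [abs_zero, add_zero, zero_add] at ha hb hc hp hq hr
  · have := abs_pos.2 aq0
    have := abs_pos.2 ar0
    rw [hp, abs_one] at ha
    linarith
  · exact core1 ha hb hc hp hq hr ap0 aq0 ar0 b2 b3 c1 c3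
  · have := core1 (by linarith : |ap| + |ar| + |aq| = 1) (by linarith : |br| + |bq| = 1) hc hp hr hq
      ap0 ar0 aq0 b3 b2 c1 c2
    exact ⟨this.1.swap, this.2.swap⟩
  · exact (core1 ha hc hb hp hq (by linarith) ap0 aq0 ar0 c2 c3 b1 b3).symm
  · exact absurd hq aq0
  · exact core2 ha hb hc hp hq hr ap0 aq0 ar0 b1 b3 c1 c2
  · have := core1 (by linarith : |ap| + |ar| + |aq| = 1) (by linarith : |cr| + |cq| = 1) hb hp hr
      (by linarith) ap0 ar0 aq0 c3 c2 b1 b2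
    exact ⟨this.2.swap, this.1.swap⟩
  · exact (core2 ha hc hb (by linarith) hq hr ap0 aq0 ar0 c1 c3 b1 b2).symm
  · exact absurd hr ar0

lemma Vc_neg (v : L13) : Vc (-v) = Vc v := by
  ext h
  constructor
  · rintro ⟨c, hc⟩
    exact ⟨-c, fun j hj => by rw [hc j (by simpa using hj)]; simp [Real.sign_neg]⟩
  · rintro ⟨c, hc⟩
    exact ⟨-c, fun j hj => by rw [hc j (by simpa using hj)]; simp [Real.sign_neg]⟩

lemma triple (p : Fin 3) : ∃ q r : Fin 3, p ≠ q ∧ p ≠ r ∧ q ≠ r ∧ (∀ j, j = p ∨ j = q ∨ j = r) ∧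
    ∀ f : Fin 3 → ℝ, ∑ j, f j = f p + f q + f r := by
  fin_cases p
  · exact ⟨1, 2, by decide, by decide, by decide, by decide, fun f => by simp [Fin.sum_univ_three]⟩
  · exact ⟨0, 2, by decide, by decide, by decide, by decide,
      fun f => by simp [Fin.sum_univ_three]; ring⟩
  · exact ⟨0, 1, by decide, by decide, by decide, by decide,
      fun f => by simp [Fin.sum_univ_three]; ring⟩

lemma Compat.le {a b : L13} {p q r : Fin 3} (ha : ∀ j, a j ≠ 0)
    (hj : ∀ j, j = p ∨ j = q ∨ j = r) (h : Compat (a p) (a q) (a r) (b p) (b q) (b r)) :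
    Vc a ≤ Vc b := by
  rintro f ⟨c, hc⟩
  obtain ⟨e, h1, h2, h3⟩ := h
  refine ⟨c * e, fun j hb => ?_⟩
  rw [hc j (ha j), mul_assoc]
  congr 1
  rcases hj j with rfl | rfl | rfl
  · exact h1 hb
  · exact h2 hb
  · exact h3 hb

lemma oneZero {b : L13} (hb : ‖b‖ = 1) (zb : finrank ℝ (Vc b) = 2) {p q r : Fin 3}
    (hpq : p ≠ q) (hpr : p ≠ r) (hqr : q ≠ r) (hj : ∀ j, j = p ∨ j = q ∨ j = r) :
    OneZero (b p) (b q) (b r) := by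
  classical
  rw [finrank_Vc hb] at zb
  obtain ⟨k, hk⟩ := Finset.card_eq_one.1 (Nat.succ.inj zb)
  have hk' : ∀ j, b j = 0 ↔ j = k := fun j => by
    simpa using Finset.ext_iff.1 hk j
  unfold OneZero
  simp only [ne_eq, hk']
  rcases hj k with rfl | rfl | rfl
  · exact Or.inl ⟨rfl, hpq.symm, hpr.symm⟩
  · exact Or.inr (Or.inl ⟨hpq, rfl, hqr.symm⟩)
  · exact Or.inr (Or.inr ⟨hpr, hqr, rfl⟩)

lemma vec_aux {a b c d : L13} (ha : ‖a‖ = 1) (hb : ‖b‖ = 1) (hc : ‖c‖ = 1)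
    (hs : a + b + c + d = 0) (ha0 : ∀ j, a j ≠ 0) (zb : finrank ℝ (Vc b) = 2)
    (zc : finrank ℝ (Vc c) = 2) {p q r : Fin 3}
    (hpq : p ≠ q) (hpr : p ≠ r) (hqr : q ≠ r) (hj : ∀ j, j = p ∨ j = q ∨ j = r)
    (hf : ∀ f : Fin 3 → ℝ, ∑ j, f j = f p + f q + f r)
    (dp : d p = -1) (dq : d q = 0) (dr : d r = 0) : Vc a ≤ Vc b ∧ Vc a ≤ Vc c := by
  rw [norm_L13, hf] at ha hb hc
  have hs' : ∀ j, a j + b j + c j + d j = 0 := fun j => by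
    have := congrArg (fun v : L13 => v j) hs
    simpa using this
  have h1 := hs' p
  have h2 := hs' q
  have h3 := hs' r
  have := core ha hb hc (by linarith) (by linarith) (by linarith) (ha0 p) (ha0 q) (ha0 r)
    (oneZero (by rw [norm_L13, hf]; exact hb) zb hpq hpr hqr hj)
    (oneZero (by rw [norm_L13, hf]; exact hc) zc hpq hpr hqr hj)
  exact ⟨this.1.le ha0 hj, this.2.le ha0 hj⟩

lemma vec {a b c d : L13} (ha : ‖a‖ = 1) (hb : ‖b‖ = 1) (hc : ‖c‖ = 1) (hd : ‖d‖ = 1)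
    (hs : a + b + c + d = 0) (za : finrank ℝ (Vc a) = 1) (zb : finrank ℝ (Vc b) = 2)
    (zc : finrank ℝ (Vc c) = 2) (zd : finrank ℝ (Vc d) = 3) :
    Vc a ≤ Vc b ∧ Vc a ≤ Vc c ∧ Vc a ≤ Vc d := by
  classical
  have ha0 : ∀ j, a j ≠ 0 := by
    rw [finrank_Vc ha] at za
    have := Finset.card_eq_zero.1 (Nat.succ.inj za)
    intro j hj
    have : j ∈ (∅ : Finset (Fin 3)) := by rw [← this]; simpa using hj
    simp at this
  have hdtop : Vc d = ⊤ := Submodule.eq_top_of_finrank_eq (by rw [zd]; simp)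
  have hdp : ∃ p, ∀ j, d j ≠ 0 ↔ j = p := by
    rw [finrank_Vc hd] at zd
    have h2 := Finset.card_filter_add_card_filter_not (s := (Finset.univ : Finset (Fin 3)))
      (fun j => d j = 0)
    rw [Nat.succ.inj zd] at h2
    have h3 : (Finset.univ.filter (fun j => ¬ d j = 0)).card = 1 := by
      simp at h2 ⊢; omega
    obtain ⟨p, hp⟩ := Finset.card_eq_one.1 h3
    exact ⟨p, fun j => by simpa using Finset.ext_iff.1 hp j⟩
  obtain ⟨p, hp⟩ := hdp
  obtain ⟨q, r, hpq, hpr, hqr, hj, hf⟩ := triple p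
  have dq : d q = 0 := by by_contra h; exact hpq ((hp q).1 h).symm
  have dr : d r = 0 := by by_contra h; exact hpr ((hp r).1 h).symm
  have dp : |d p| = 1 := by
    rw [norm_L13, hf, dq, dr] at hd
    simpa using hd
  suffices h : Vc a ≤ Vc b ∧ Vc a ≤ Vc c from ⟨h.1, h.2, by rw [hdtop]; exact le_top⟩
  rcases eq_or_eq_neg_of_abs_eq dp with h | h
  · have := vec_aux (a := -a) (b := -b) (c := -c) (d := -d) (by rwa [norm_neg]) (by rwa [norm_neg])
      (by rwa [norm_neg]) (by rw [← neg_add, ← neg_add, ← neg_add, hs, neg_zero])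
      (fun j => by simpa using ha0 j)
      (by rwa [Vc_neg]) (by rwa [Vc_neg]) hpq hpr hqr hj hf (by simp [h]) (by simp [dq])
      (by simp [dr])
    simpa only [Vc_neg] using this
  · exact vec_aux ha hb hc hs ha0 zb zc hpq hpr hqr hj hf h dq dr

def XX : Fin 4 → Linf3 := ![x₁, x₂, x₃, x₄]
def ep : Fin 4 → ℝ := ![1, -1, 1, -1]

lemma ep_cases (i : Fin 4) : ep i = 1 ∨ ep i = -1 := by
  fin_cases i <;> simp [ep]

lemma Vc_ep (i : Fin 4) (v : L13) : Vc (ep i • v) = Vc v := by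
  rcases ep_cases i with h | h <;> simp [h, Vc_neg]

lemma sum_XX : ∑ i, ep i • XX i = 0 := by
  ext j
  fin_cases j <;> simp [Fin.sum_univ_four, ep, XX, x₁, x₂, x₃, x₄]

lemma norm_XX (i : Fin 4) : ‖XX i‖ = 1 := by
  apply le_antisymm
  · rw [pi_norm_le_iff_of_nonneg zero_le_one]
    intro j
    fin_cases i <;> fin_cases j <;> simp [XX, x₁, x₂, x₃, x₄]
  · have := norm_le_pi_norm (XX i) 2
    refine le_trans ?_ this
    fin_cases i <;> simp [XX, x₁, x₂, x₃, x₄]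

lemma aux_abs {P Q : ℝ} (hP : 0 ≤ P) (hQ : 0 ≤ Q) : |(P - Q) / 8| ≤ (P + Q) / 8 := by
  rw [abs_le]; constructor <;> linarith

lemma opNorm_le_one {S : Linf3 →L[ℝ] L13} (hS : ∀ i, ‖S (XX i)‖ ≤ 1) : ‖S‖ ≤ 1 := by
  refine ContinuousLinearMap.opNorm_le_of_unit_norm zero_le_one fun x hx => ?_
  have hb : ∀ j, 0 ≤ 1 + x j ∧ 0 ≤ 1 - x j := fun j => by
    have := norm_le_pi_norm x j
    rw [hx, Real.norm_eq_abs, abs_le] at this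
    constructor <;> linarith
  obtain ⟨a1, a2⟩ := hb 0
  obtain ⟨b1, b2⟩ := hb 1
  obtain ⟨c1, c2⟩ := hb 2
  generalize ha : x 0 = a at *
  generalize hb : x 1 = b at *
  generalize hc : x 2 = c at *
  set l : Fin 4 → ℝ := ![((1+a)*(1+b)*(1+c) - (1-a)*(1-b)*(1-c))/8,
    ((1-a)*(1+b)*(1+c) - (1+a)*(1-b)*(1-c))/8, ((1-a)*(1-b)*(1+c) - (1+a)*(1+b)*(1-c))/8,
    ((1+a)*(1-b)*(1+c) - (1-a)*(1+b)*(1-c))/8] with hl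
  have hx : x = ∑ i, l i • XX i := by
    ext j
    fin_cases j <;> simp [Fin.sum_univ_four, l, XX, x₁, x₂, x₃, x₄, ha, hb, hc] <;> ring
  have hsum : ∑ i, |l i| ≤ 1 := by
    simp only [Fin.sum_univ_four]
    have h0 : |l 0| ≤ _ := aux_abs (P := (1+a)*(1+b)*(1+c)) (Q := (1-a)*(1-b)*(1-c))
      (by positivity) (by positivity)
    have h1 : |l 1| ≤ _ := aux_abs (P := (1-a)*(1+b)*(1+c)) (Q := (1+a)*(1-b)*(1-c))
      (by positivity) (by positivity)
    have h2 : |l 2| ≤ _ := aux_abs (P := (1-a)*(1-b)*(1+c)) (Q := (1+a)*(1+b)*(1-c))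
      (by positivity) (by positivity)
    have h3 : |l 3| ≤ _ := aux_abs (P := (1+a)*(1-b)*(1+c)) (Q := (1-a)*(1+b)*(1-c))
      (by positivity) (by positivity)
    linarith
  rw [hx, map_sum]
  refine (norm_sum_le _ _).trans (le_trans (Finset.sum_le_sum fun i _ => ?_) hsum)
  rw [map_smul, norm_smul, Real.norm_eq_abs]
  exact mul_le_of_le_one_right (abs_nonneg _) (hS i)

open Filter Topology in
lemma local_abs (v u : ℝ) (h : v = 0 → u = 0) :
    ∀ᶠ t : ℝ in 𝓝 0, |v + t * u| = |v| + t * (Real.sign v * u) := by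
  have hcont : Tendsto (fun t : ℝ => v + t * u) (𝓝 0) (𝓝 v) := by
    have : Continuous (fun t : ℝ => v + t * u) := by fun_prop
    simpa using this.tendsto 0
  rcases lt_trichotomy v 0 with hv | hv | hv
  · filter_upwards [hcont.eventually_lt_const hv] with t ht
    rw [abs_of_neg ht, abs_of_neg hv, Real.sign_of_neg hv]; ring
  · simp [hv, h hv]
  · filter_upwards [hcont.eventually_const_lt hv] with t ht
    rw [abs_of_pos ht, abs_of_pos hv, Real.sign_of_pos hv]; ring

open Filter Topology in
lemma local_norm {v u : L13} (hv : ‖v‖ = 1) (h : ∀ k ∈ Vc v, fnL k u = 0) :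
    ∀ᶠ t : ℝ in 𝓝 0, ‖v + t • u‖ = 1 := by
  have h0 : ∀ j, v j = 0 → u j = 0 := fun j hj => by
    have := h (Pi.single j 1) ⟨0, fun k hk => by
      have : k ≠ j := by rintro rfl; exact hk hj
      simp [this]⟩
    simpa [fnL_apply, Pi.single_apply] using this
  have h1 := h (fun j => Real.sign (v j)) ⟨1, fun k hk => by simp⟩
  rw [fnL_apply] at h1
  have := (eventually_all (ι := Fin 3)).2 fun j => local_abs (v j) (u j) (h0 j)
  filter_upwards [this] with t ht
  rw [norm_L13, ← hv, norm_L13]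
  simp only [PiLp.add_apply, PiLp.smul_apply, smul_eq_mul, ht, Finset.sum_add_distrib]
  rw [← Finset.mul_sum, h1, mul_zero, add_zero]

/-- evaluation at x -/
def evx (x : Linf3) : (L13 →L[ℝ] ℝ) →ₗ[ℝ] ((Linf3 →L[ℝ] L13) →L[ℝ] ℝ) where
  toFun g := g.comp (ContinuousLinearMap.apply ℝ L13 x)
  map_add' a b := by ext; simp
  map_smul' c a := by ext; simp

lemma evx_apply (x : Linf3) (g : L13 →L[ℝ] ℝ) (S : Linf3 →L[ℝ] L13) : evx x g S = g (S x) := rfl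

def Phi (T : Linf3 →L[ℝ] L13) :
    ((i : Fin 4) → Vc (T (XX i))) →ₗ[ℝ] ((Linf3 →L[ℝ] L13) →L[ℝ] ℝ) :=
  ∑ i, (evx (XX i)) ∘ₗ fnL ∘ₗ (Vc (T (XX i))).subtype ∘ₗ LinearMap.proj i

lemma Phi_apply (T : Linf3 →L[ℝ] L13) (g : (i : Fin 4) → Vc (T (XX i))) (S : Linf3 →L[ℝ] L13) :
    Phi T g S = ∑ i, fnL (g i) (S (XX i)) := by
  simp [Phi, evx_apply]

lemma range_Phi {T : Linf3 →L[ℝ] L13} (hT : ‖T‖ = 1) (hv : ∀ i, ‖T (XX i)‖ = 1) :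
    LinearMap.range (Phi T) = Submodule.span ℝ (suppFunctionals T) := by
  classical
  apply le_antisymm
  · rintro _ ⟨g, rfl⟩
    have : Phi T g = ∑ i, evx (XX i) (fnL (g i)) := by
      ext S; simp [Phi_apply, evx_apply]
    rw [this]
    refine Submodule.sum_mem _ fun i _ => ?_
    have hle : (Submodule.span ℝ (suppFunctionals (T (XX i)))).map (evx (XX i)) ≤
        Submodule.span ℝ (suppFunctionals T) := by
      rw [Submodule.map_span_le]
      rintro f ⟨f1, f2⟩
      apply Submodule.subset_span
      have e : evx (XX i) f T = 1 := by rw [evx_apply, f2]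
      refine ⟨le_antisymm ?_ ?_, e⟩
      · refine ContinuousLinearMap.opNorm_le_bound _ zero_le_one fun S => ?_
        rw [evx_apply]
        have h1 := f.le_opNorm (S (XX i))
        have h2 := S.le_opNorm (XX i)
        rw [f1] at h1
        rw [norm_XX] at h2
        linarith
      · have := (evx (XX i) f).le_opNorm T
        rw [e, hT] at this
        simpa using this
    apply hle
    refine ⟨_, ?_, rfl⟩
    rw [span_J (hv i)]
    exact ⟨_, (g i).2, rfl⟩
  · rw [Submodule.span_le]
    rintro F ⟨F1, F2⟩
    by_contra hF
    obtain ⟨ψ, hψ, hker⟩ := Submodule.exists_le_ker_of_notMem hF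
    obtain ⟨S, hS⟩ : ∃ S : Linf3 →L[ℝ] L13, ∀ G : (Linf3 →L[ℝ] L13) →L[ℝ] ℝ, ψ G = G S := by
      let e := (LinearMap.toContinuousLinearMap (𝕜 := ℝ) (E := Linf3 →L[ℝ] L13) (F' := ℝ))
      refine ⟨(Module.evalEquiv ℝ (Linf3 →L[ℝ] L13)).symm (ψ ∘ₗ e.toLinearMap), fun G => ?_⟩
      have := Module.apply_evalEquiv_symm_apply ℝ (Linf3 →L[ℝ] L13)
        (G : (Linf3 →L[ℝ] L13) →ₗ[ℝ] ℝ) (ψ ∘ₗ e.toLinearMap)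
      refine Eq.trans ?_ this.symm
      simp only [LinearMap.comp_apply]
      congr 1
    have hu : ∀ i, ∀ k ∈ Vc (T (XX i)), fnL k (S (XX i)) = 0 := by
      intro i k hk
      have h1 : ψ (Phi T (Pi.single i ⟨k, hk⟩)) = 0 := hker ⟨_, rfl⟩
      rw [hS, Phi_apply, Finset.sum_eq_single i] at h1
      · simpa using h1
      · intro j _ hj
        simp [Pi.single_eq_of_ne hj]
      · simp
    have hloc := (Filter.eventually_all (ι := Fin 4)).2 fun i => local_norm (hv i) (hu i)
    obtain ⟨δ, hδ, hball⟩ := Metric.eventually_nhds_iff.1 hloc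
    have key : ∀ t : ℝ, |t| < δ → t * F S ≤ 0 := by
      intro t ht
      have h1 : ‖T + t • S‖ ≤ 1 := opNorm_le_one fun i => by
        have := hball (y := t) (by simpa using ht) i
        simpa using this.le
      have h2 := F.le_opNorm (T + t • S)
      rw [F1, map_add, map_smul, F2, one_mul] at h2
      have h3 := le_abs_self (1 + t • F S)
      rw [Real.norm_eq_abs] at h2
      rw [smul_eq_mul] at h2 h3
      linarith
    have h1 := key (δ / 2) (by rw [abs_of_pos] <;> linarith)
    have h2 := key (-(δ / 2)) (by rw [abs_neg, abs_of_pos] <;> linarith)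
    apply hψ
    rw [hS]
    nlinarith

lemma ker_Phi {T : Linf3 →L[ℝ] L13} (g : (i : Fin 4) → Vc (T (XX i))) (hg : Phi T g = 0) :
    ∀ i, (g i : Fin 3 → ℝ) = ep i • (g 0 : Fin 3 → ℝ) := by
  have key : ∀ (k j : Fin 3), ∑ i, XX i k * (g i : Fin 3 → ℝ) j = 0 := by
    intro k j
    have h := congrArg (fun G => G ((ContinuousLinearMap.proj (R := ℝ) (φ := fun _ : Fin 3 => ℝ) k).smulRight
      (ee j))) hg
    simp only [Phi_apply] at h
    simpa [fnL_ee] using h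
  intro i
  ext j
  have h0 := key 0 j
  have h1 := key 1 j
  have h2 := key 2 j
  simp [Fin.sum_univ_four, XX, x₁, x₂, x₃, x₄] at h0 h1 h2
  fin_cases i <;> simp [ep] <;> linarith

lemma ker_Phi' {T : Linf3 →L[ℝ] L13} (g : (i : Fin 4) → Vc (T (XX i))) (h : Fin 3 → ℝ)
    (hg : ∀ i, (g i : Fin 3 → ℝ) = ep i • h) : Phi T g = 0 := by
  ext1 S
  rw [Phi_apply]
  have : ∑ i, fnL (g i) (S (XX i)) = fnL h (S (∑ i, ep i • XX i)) := by
    simp [hg, map_sum]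
  rw [this, sum_XX]
  simp

lemma finrank_ker {T : Linf3 →L[ℝ] L13} (a : Fin 4)
    (ha : finrank ℝ (Vc (T (XX a))) = 1) (hle : ∀ i, Vc (T (XX a)) ≤ Vc (T (XX i))) :
    finrank ℝ (LinearMap.ker (Phi T)) = 1 := by
  obtain ⟨⟨s, hs⟩, hs0, hsp⟩ := finrank_eq_one_iff'.1 ha
  let k0 : (i : Fin 4) → Vc (T (XX i)) := fun i => ⟨ep i • s, Submodule.smul_mem _ _ (hle i hs)⟩
  have hk0 : Phi T k0 = 0 := ker_Phi' k0 s fun i => rfl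
  haveI : Module.Free ℝ (LinearMap.ker (Phi T)) :=
    Module.Free.of_divisionRing (K := ℝ) (V := LinearMap.ker (Phi T))
  refine (finrank_eq_one_iff' (K := ℝ) (V := LinearMap.ker (Phi T))).2 ⟨⟨k0, hk0⟩, ?_, ?_⟩
  · intro h
    apply hs0
    have := congrArg (fun z : LinearMap.ker (Phi T) => ((z : (i : Fin 4) → Vc (T (XX i))) 0 : Fin 3 → ℝ)) h
    simpa [k0, ep] using this
  · rintro ⟨g, hg⟩
    have hg' := ker_Phi g hg
    have h0 : (g 0 : Fin 3 → ℝ) ∈ Vc (T (XX a)) := by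
      have h1 := (g a).2
      rw [hg' a] at h1
      rcases ep_cases a with h | h <;> simpa [h] using h1
    obtain ⟨c, hc⟩ := hsp (⟨(g 0 : Fin 3 → ℝ), h0⟩ : Vc (T (XX a)))
    have hc' : c • s = (g 0 : Fin 3 → ℝ) := congrArg Subtype.val hc
    refine ⟨c, ?_⟩
    apply Subtype.ext
    funext i
    apply Subtype.ext
    rw [hg' i, ← hc', smul_comm]
    rfl

def X8 (p : Fin 4 × Bool) : Linf3 := if p.2 then XX p.1 else -XX p.1

lemma X8_inj : Function.Injective X8 := by
  rintro ⟨i, b⟩ ⟨j, c⟩ h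
  have h0 := congrFun h 0
  have h1 := congrFun h 1
  have h2 := congrFun h 2
  clear h
  fin_cases i <;> fin_cases j <;> cases b <;> cases c <;>
    simp [X8, XX, x₁, x₂, x₃, x₄] at h0 h1 h2 ⊢ <;> linarith

lemma card_Sk {T : Linf3 →L[ℝ] L13}
    (hMT : MTExt T = {x₁, -x₁, x₂, -x₂, x₃, -x₃, x₄, -x₄}) (hv : ∀ i, ‖T (XX i)‖ = 1) (k : ℕ) :
    (Sk T k).encard =
      ((2 * (Finset.univ.filter (fun i => finrank ℝ (Vc (T (XX i))) = k)).card : ℕ) : ℕ∞) := by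
  classical
  have hd : ∀ p, finrank ℝ (Submodule.span ℝ (suppFunctionals (T (X8 p)))) =
      finrank ℝ (Vc (T (XX p.1))) := by
    rintro ⟨i, b⟩
    cases b
    · have e : T (X8 (i, false)) = -T (XX i) := by simp [X8]
      rw [e, finrank_span_J (by rw [norm_neg, hv]), Vc_neg]
    · have e : T (X8 (i, true)) = T (XX i) := by simp [X8]
      rw [e, finrank_span_J (hv i)]
  have hM : MTExt T = Set.range X8 := by
    rw [hMT]
    ext x
    simp only [Set.mem_insert_iff, Set.mem_singleton_iff, Set.mem_range, Prod.exists, Bool.exists_bool,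
      Fin.exists_fin_succ, X8, XX]
    simp [eq_comm]
    tauto
  have hS : Sk T k = X8 '' (((Finset.univ.filter (fun i => finrank ℝ (Vc (T (XX i))) = k)) ×ˢ
      (Finset.univ : Finset Bool) : Finset (Fin 4 × Bool)) : Set (Fin 4 × Bool)) := by
    ext x
    simp only [Sk, hM, Set.mem_ofPred_eq, Set.mem_image]
    constructor
    · rintro ⟨⟨p, rfl⟩, hx⟩
      rw [hd] at hx
      exact ⟨p, by simpa using hx, rfl⟩
    · rintro ⟨p, hp, rfl⟩
      refine ⟨⟨p, rfl⟩, ?_⟩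
      rw [hd]
      simpa using hp
  rw [hS, X8_inj.encard_image, Set.encard_coe_eq_coe_finsetCard, Finset.card_product]
  simp [mul_comm]

theorem stmt_18
    (T : Linf3 →L[ℝ] L13) (hT : ‖T‖ = 1)
    (hMT : MTExt T = {x₁, -x₁, x₂, -x₂, x₃, -x₃, x₄, -x₄})
    (h1 : (Sk T 1).encard = 2) (h2 : (Sk T 2).encard = 4)
    (h3 : (Sk T 3).encard = 2)
    :
    finrank ℝ (Submodule.span ℝ (suppFunctionals T)) = 7 := by
  classical
  have hv : ∀ i, ‖T (XX i)‖ = 1 := by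
    intro i
    have : XX i ∈ MTExt T := by
      rw [hMT]
      fin_cases i <;> simp [XX]
    rw [← hT]
    exact this.1.2
  rw [card_Sk hMT hv] at h1 h2 h3
  have h1' : 2 * (Finset.univ.filter (fun i => finrank ℝ (Vc (T (XX i))) = 1)).card = 2 := by
    exact_mod_cast h1
  have h2' : 2 * (Finset.univ.filter (fun i => finrank ℝ (Vc (T (XX i))) = 2)).card = 4 := by
    exact_mod_cast h2
  have h3' : 2 * (Finset.univ.filter (fun i => finrank ℝ (Vc (T (XX i))) = 3)).card = 2 := by
    exact_mod_cast h3
  obtain ⟨a, ha⟩ := Finset.card_eq_one.1 (by omega :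
    (Finset.univ.filter (fun i => finrank ℝ (Vc (T (XX i))) = 1)).card = 1)
  obtain ⟨b, c, hbc, hb⟩ := Finset.card_eq_two.1 (by omega :
    (Finset.univ.filter (fun i => finrank ℝ (Vc (T (XX i))) = 2)).card = 2)
  obtain ⟨d, hd⟩ := Finset.card_eq_one.1 (by omega :
    (Finset.univ.filter (fun i => finrank ℝ (Vc (T (XX i))) = 3)).card = 1)
  have za : finrank ℝ (Vc (T (XX a))) = 1 := by
    simpa using (Finset.ext_iff.1 ha a).2 (by simp)
  have zb : finrank ℝ (Vc (T (XX b))) = 2 := by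
    simpa using (Finset.ext_iff.1 hb b).2 (by simp)
  have zc : finrank ℝ (Vc (T (XX c))) = 2 := by
    simpa using (Finset.ext_iff.1 hb c).2 (by simp)
  have zd : finrank ℝ (Vc (T (XX d))) = 3 := by
    simpa using (Finset.ext_iff.1 hd d).2 (by simp)
  have hab : a ≠ b := by rintro rfl; omega
  have hac : a ≠ c := by rintro rfl; omega
  have had : a ≠ d := by rintro rfl; omega
  have hbd : b ≠ d := by rintro rfl; omega
  have hcd : c ≠ d := by rintro rfl; omega
  have huniv : (Finset.univ : Finset (Fin 4)) = {a, b, c, d} := by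
    symm
    rw [← Finset.card_eq_iff_eq_univ]
    simp [Finset.card_insert_of_notMem, hab, hac, had, hbc, hbd, hcd]
  have hsum : ∀ {M : Type} [AddCommMonoid M] (f : Fin 4 → M), ∑ i, f i = f a + f b + f c + f d := by
    intro M _ f
    rw [huniv, Finset.sum_insert (by simp [hab, hac, had]), Finset.sum_insert (by simp [hbc, hbd]),
      Finset.sum_insert (by simp [hcd]), Finset.sum_singleton]
    simp only [add_assoc]
  have hn : ∀ i, ‖ep i • T (XX i)‖ = 1 := fun i => by
    rw [norm_smul, hv]
    rcases ep_cases i with h | h <;> simp [h]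
  have hzero : ∑ i, ep i • T (XX i) = 0 := by
    have := congrArg T sum_XX
    simpa [map_sum] using this
  rw [hsum] at hzero
  have hle := vec (hn a) (hn b) (hn c) (hn d) hzero (by rwa [Vc_ep]) (by rwa [Vc_ep])
    (by rwa [Vc_ep]) (by rwa [Vc_ep])
  simp only [Vc_ep] at hle
  have hle' : ∀ i, Vc (T (XX a)) ≤ Vc (T (XX i)) := by
    intro i
    have hi : i ∈ ({a, b, c, d} : Finset (Fin 4)) := huniv ▸ Finset.mem_univ i
    simp only [Finset.mem_insert, Finset.mem_singleton] at hi
    rcases hi with rfl | rfl | rfl | rfl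
    · exact le_rfl
    · exact hle.1
    · exact hle.2.1
    · exact hle.2.2
  have hker := finrank_ker a za hle'
  have hrn := LinearMap.finrank_range_add_finrank_ker (K := ℝ)
    (V := (i : Fin 4) → Vc (T (XX i))) (V₂ := (Linf3 →L[ℝ] L13) →L[ℝ] ℝ) (Phi T)
  rw [hker, Module.finrank_pi_fintype, hsum, za, zb, zc, zd, range_Phi hT hv] at hrn
  omega
end
end

section
/- Let X = ℓ∞³, Y = ℓ₁³, and let T : X → Y be a bounded linear operator with ‖T‖ = 1 such that M_T ∩ Ext(B_X) = {±x₁, ±x₂, ±x₃, ±x₄}. If |S₃| = 8, i.e., Tx is 3-smooth for every x ∈ M_T ∩ Ext(B_X), then T is 9-smooth, i.e., dim span J(T) = 9. -/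
open Metric Set Module Pointwise

noncomputable section

/-- The functional `A ↦ g (A x)`. -/
def evalF (x : Linf3) : (L13 →L[ℝ] ℝ) →ₗ[ℝ] ((Linf3 →L[ℝ] L13) →L[ℝ] ℝ) where
  toFun g := g.comp (ContinuousLinearMap.apply ℝ L13 x)
  map_add' _ _ := rfl
  map_smul' _ _ := rfl

theorem evalF_apply (x : Linf3) (g : L13 →L[ℝ] ℝ) (A : Linf3 →L[ℝ] L13) :
    evalF x g A = g (A x) := rfl

theorem evalF_mem_supp (T : Linf3 →L[ℝ] L13) (hT : ‖T‖ = 1) (x : Linf3) (hx : ‖x‖ = 1)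
    (g : L13 →L[ℝ] ℝ) (hg : g ∈ suppFunctionals (T x)) : evalF x g ∈ suppFunctionals T := by
  obtain ⟨h1, h2⟩ := hg
  refine ⟨le_antisymm ?_ ?_, h2⟩
  · refine ContinuousLinearMap.opNorm_le_bound _ zero_le_one fun A => ?_
    rw [evalF_apply]
    calc ‖g (A x)‖ ≤ ‖g‖ * ‖A x‖ := g.le_opNorm _
      _ ≤ ‖g‖ * (‖A‖ * ‖x‖) := by gcongr; exact A.le_opNorm _
      _ = 1 * ‖A‖ := by rw [h1, hx]; ring
  · have h := (evalF x g).le_opNorm T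
    rw [evalF_apply, h2, hT] at h
    simpa using h

theorem finrank_dual_clm (E : Type*) [NormedAddCommGroup E] [NormedSpace ℝ E]
    [FiniteDimensional ℝ E] : finrank ℝ (E →L[ℝ] ℝ) = finrank ℝ E := by
  rw [← (LinearMap.toContinuousLinearMap (𝕜 := ℝ) (E := E) (F' := ℝ)).finrank_eq]
  exact Subspace.dual_finrank_eq

theorem evalF_mem_span (T : Linf3 →L[ℝ] L13) (hT : ‖T‖ = 1) (x : Linf3) (hx : x ∈ Sk T 3)
    (g : L13 →L[ℝ] ℝ) : evalF x g ∈ Submodule.span ℝ (suppFunctionals T) := by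
  obtain ⟨⟨⟨hs, _⟩, _⟩, hk⟩ := hx
  have hx1 : ‖x‖ = 1 := by simpa using hs
  have htop : Submodule.span ℝ (suppFunctionals (T x)) = ⊤ := by
    apply Submodule.eq_top_of_finrank_eq
    rw [hk, finrank_dual_clm, (WithLp.linearEquiv 1 ℝ (Fin 3 → ℝ)).finrank_eq]
    simp
  have hg : g ∈ Submodule.span ℝ (suppFunctionals (T x)) := htop ▸ Submodule.mem_top
  have hle : Submodule.span ℝ (suppFunctionals (T x)) ≤
      (Submodule.span ℝ (suppFunctionals T)).comap (evalF x) :=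
    Submodule.span_le.2 fun f hf => Submodule.subset_span (evalF_mem_supp T hT x hx1 f hf)
  exact hle hg

theorem stmt_19
    (T : Linf3 →L[ℝ] L13) (hT : ‖T‖ = 1)
    (hMT : MTExt T = {x₁, -x₁, x₂, -x₂, x₃, -x₃, x₄, -x₄})
    (h3 : (Sk T 3).encard = 8)
    :
    finrank ℝ (Submodule.span ℝ (suppFunctionals T)) = 9 := by
  have hsub : Sk T 3 ⊆ MTExt T := fun x hx => hx.1
  have hfin : (MTExt T).Finite := by rw [hMT]; exact Set.toFinite _
  have hcard : (MTExt T).encard ≤ (Sk T 3).encard := by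
    rw [h3, hMT]
    have : ({x₁, -x₁, x₂, -x₂, x₃, -x₃, x₄, -x₄} : Set Linf3) =
        ((([x₁, -x₁, x₂, -x₂, x₃, -x₃, x₄, -x₄] : List Linf3).toFinset : Finset Linf3) :
          Set Linf3) := by
      ext; simp
    rw [this, Set.encard_coe_eq_coe_finsetCard]
    exact_mod_cast List.toFinset_card_le _
  have heq : Sk T 3 = MTExt T := hfin.eq_of_subset_of_encard_le' hsub hcard
  set W := Submodule.span ℝ (suppFunctionals T) with hW
  have m1 := evalF_mem_span T hT x₁ (by rw [heq, hMT]; simp)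
  have m2 := evalF_mem_span T hT x₂ (by rw [heq, hMT]; simp)
  have m3 := evalF_mem_span T hT x₃ (by rw [heq, hMT]; simp)
  rw [← hW] at m1 m2 m3
  have htop : W = ⊤ := by
    rw [eq_top_iff]
    rintro F -
    let G : Fin 3 → (L13 →L[ℝ] ℝ) := fun j =>
      F.comp (ContinuousLinearMap.smulRightL ℝ Linf3 L13 (ContinuousLinearMap.proj j))
    have hF : F = evalF x₁ ((1 / 2 : ℝ) • (G 0 + G 2)) + evalF x₂ ((1 / 2 : ℝ) • (G 1 - G 0))
        + evalF x₃ ((1 / 2 : ℝ) • (G 2 - G 1)) := by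
      ext A
      have key : A =
          (ContinuousLinearMap.proj 0 : Linf3 →L[ℝ] ℝ).smulRight ((1 / 2 : ℝ) • (A x₁ - A x₂)) +
          (ContinuousLinearMap.proj 1 : Linf3 →L[ℝ] ℝ).smulRight ((1 / 2 : ℝ) • (A x₂ - A x₃)) +
          (ContinuousLinearMap.proj 2 : Linf3 →L[ℝ] ℝ).smulRight
            ((1 / 2 : ℝ) • (A x₁ + A x₃)) := by
        refine ContinuousLinearMap.ext fun v => ?_
        have hv : v = v 0 • ((1 / 2 : ℝ) • (x₁ - x₂)) + v 1 • ((1 / 2 : ℝ) • (x₂ - x₃)) +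
            v 2 • ((1 / 2 : ℝ) • (x₁ + x₃)) := by
          funext i
          fin_cases i <;> simp [x₁, x₂, x₃] <;> ring
        conv_lhs => rw [hv]
        simp only [map_add, map_sub, map_smul, ContinuousLinearMap.add_apply,
          ContinuousLinearMap.smulRight_apply, ContinuousLinearMap.proj_apply]
      have hG : ∀ j y, G j y = F ((ContinuousLinearMap.proj j : Linf3 →L[ℝ] ℝ).smulRight y) :=
        fun _ _ => rfl
      conv_lhs => rw [key]
      rw [map_add, map_add, ← hG, ← hG, ← hG]
      simp only [map_add, map_sub, map_smul, ContinuousLinearMap.add_apply, evalF_apply,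
        ContinuousLinearMap.sub_apply, ContinuousLinearMap.smul_apply, smul_eq_mul]
      ring
    rw [hF]
    exact W.add_mem (W.add_mem (m1 _) (m2 _)) (m3 _)
  rw [htop, finrank_top, finrank_dual_clm,
    ← (LinearMap.toContinuousLinearMap (𝕜 := ℝ) (E := Linf3) (F' := L13)).finrank_eq,
    Module.finrank_linearMap, (WithLp.linearEquiv 1 ℝ (Fin 3 → ℝ)).finrank_eq]
  simp
end
end
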